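/- Let G be a finite group and S a generating subset of G with 1 ∈ S and S ≠ G. If S is not faithful, then G is non-abelian and S⁻¹ is faithful. -/

import Mathlib

open Pointwise

variable {G : Type*} [Group G] [DecidableEq G]

/-- `X` belongs to the family `F(S)`: `X` is nonempty and `XS` is a (finite)
proper subset of `G`. -/
def MemFam (S X : Finset G) : Prop :=
  X.Nonempty ∧ (↑(X * S) : Set G) ≠ Set.univ

/-- `X` is a fragment of `S`: a member of `F(S)` attaining the minimum of
`|XS| - |X|`. -/
def IsFragment (S X : Finset G) : Prop :=
  MemFam S X ∧ ∀ Y : Finset G, MemFam S Y →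
    (X * S).card - X.card ≤ (Y * S).card - Y.card

/-- `X` is an atom of `S`: a fragment of smallest cardinality. -/
def IsAtomOf (S X : Finset G) : Prop :=
  IsFragment S X ∧ ∀ Y : Finset G, IsFragment S Y → X.card ≤ Y.card

/-- `S` is faithful: every atom `A` of `S` satisfies `|A| ≤ |∇(A)|`. -/
def IsFaithful (S : Finset G) : Prop :=
  ∀ A : Finset G, IsAtomOf S A → A.card ≤ ((A * S) \ A).card


theorem aux_le {G : Type*} [Group G] [DecidableEq G] {S : Finset G}
    (h1 : (1 : G) ∈ S) (X : Finset G) : X ⊆ X * S := by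
  intro x hx
  exact Finset.mem_mul.2 ⟨x, hx, 1, h1, mul_one x⟩

theorem aux_ne {G : Type*} [Group G] [Fintype G] [DecidableEq G] {S X : Finset G} :
    MemFam S X ↔ X.Nonempty ∧ X * S ≠ Finset.univ := by
  unfold MemFam
  rw [Ne, Finset.coe_eq_univ]

theorem aux_dual {G : Type*} [Group G] [Fintype G] [DecidableEq G] {S X : Finset G}
    (h1 : (1 : G) ∈ S) (h : MemFam S X) :
    MemFam S⁻¹ (X * S)ᶜ ∧
      ((X * S)ᶜ * S⁻¹).card - ((X * S)ᶜ).card ≤ (X * S).card - X.card := by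
  rw [aux_ne] at h
  have hsub : (X * S)ᶜ * S⁻¹ ⊆ Xᶜ := by
    intro y hy
    obtain ⟨d, hd, t, ht, rfl⟩ := Finset.mem_mul.1 hy
    rw [Finset.mem_compl] at hd ⊢
    intro hx
    apply hd
    exact Finset.mem_mul.2 ⟨d * t, hx, t⁻¹, Finset.mem_inv'.1 ht, by simp⟩
  constructor
  · rw [aux_ne]
    constructor
    · rw [Finset.nonempty_iff_ne_empty, Ne, Finset.compl_eq_empty_iff]
      exact h.2
    · intro hu
      rw [hu] at hsub
      obtain ⟨x, hx⟩ := h.1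
      have := hsub (Finset.mem_univ x)
      simp [hx] at this
  · have h2 := Finset.card_le_card hsub
    have h3 := Finset.card_add_card_compl X
    have h4 := Finset.card_add_card_compl (X * S)
    have h5 := Finset.card_le_card (aux_le h1 X)
    omega

theorem aux_frag {G : Type*} [Group G] [Fintype G] [DecidableEq G] {S X : Finset G}
    (h1 : (1 : G) ∈ S) (h : IsFragment S X) : IsFragment S⁻¹ (X * S)ᶜ := by
  have hd := aux_dual h1 h.1
  refine ⟨hd.1, fun Y hY => ?_⟩
  have h1' : (1 : G) ∈ S⁻¹ := by simpa using h1
  have hY' := aux_dual h1' hY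
  rw [inv_inv] at hY'
  have := h.2 _ hY'.1
  omega

theorem aux_smul {G : Type*} [Group G] [Fintype G] [DecidableEq G] {S X : Finset G}
    (g : G) (h : IsAtomOf S X) : IsAtomOf S (g • X) := by
  obtain ⟨⟨hm, hf⟩, ha⟩ := h
  rw [aux_ne] at hm
  refine ⟨⟨?_, ?_⟩, ?_⟩
  · rw [aux_ne]
    refine ⟨hm.1.smul_finset, ?_⟩
    rw [smul_mul_assoc]
    intro hu
    apply hm.2
    rw [← Finset.card_eq_iff_eq_univ] at hu ⊢
    rwa [Finset.card_smul_finset] at hu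
  · simpa only [smul_mul_assoc, Finset.card_smul_finset] using hf
  · simpa only [Finset.card_smul_finset] using ha

theorem aux_inter {G : Type*} [Group G] [Fintype G] [DecidableEq G] {S A B : Finset G}
    (h1 : (1 : G) ∈ S) (hA : IsAtomOf S A) (hB : IsAtomOf S B)
    (hY : ∀ Y, IsFragment S⁻¹ Y → A.card ≤ Y.card) (hne : (A ∩ B).Nonempty) : A = B := by
  by_contra hAB
  have hcard : A.card = B.card := le_antisymm (hA.2 _ hB.1) (hB.2 _ hA.1)
  have hlt : (A ∩ B).card < A.card := by
    apply Finset.card_lt_card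
    refine ⟨Finset.inter_subset_left, fun hs => hAB ?_⟩
    exact Finset.eq_of_subset_of_card_le
      (fun x hx => (Finset.mem_inter.1 (hs hx)).2) hcard.ge
  have hsubI : (A ∩ B) * S ⊆ (A * S) ∩ (B * S) := Finset.inter_mul_subset
  have hsubU : (A ∪ B) * S = (A * S) ∪ (B * S) := Finset.union_mul
  have c1 := Finset.card_le_card hsubI
  have c2 := Finset.card_union_add_card_inter (A * S) (B * S)
  have c3 := Finset.card_union_add_card_inter A B
  rw [← hsubU] at c2
  have lA := Finset.card_le_card (aux_le h1 A)
  have lB := Finset.card_le_card (aux_le h1 B)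
  have lI := Finset.card_le_card (aux_le h1 (A ∩ B))
  have lU := Finset.card_le_card (aux_le h1 (A ∪ B))
  have kAB := hA.1.2 _ hB.1.1
  have kBA := hB.1.2 _ hA.1.1
  have mI : MemFam S (A ∩ B) := by
    rw [aux_ne]
    refine ⟨hne, fun hu => (aux_ne.1 hA.1.1).2 ?_⟩
    rw [hu] at hsubI
    exact Finset.eq_univ_of_forall fun x =>
      (Finset.mem_inter.1 (hsubI (Finset.mem_univ x))).1
  have kI : (A * S).card - A.card < ((A ∩ B) * S).card - (A ∩ B).card := by
    by_contra hc
    have : IsFragment S (A ∩ B) := ⟨mI, fun Y hY' => by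
      have := hA.1.2 Y hY'
      omega⟩
    have := hA.2 _ this
    omega
  have hD := hY _ (aux_frag h1 hA.1)
  have c4 := Finset.card_add_card_compl (A * S)
  by_cases hu : (A ∪ B) * S = Finset.univ
  · rw [hu, Finset.card_univ] at c2
    omega
  · have mU : MemFam S (A ∪ B) :=
      aux_ne.2 ⟨hne.mono (fun x hx => Finset.mem_union_left _ (Finset.mem_inter.1 hx).1), hu⟩
    have := hA.1.2 _ mU
    omega

theorem aux_main {G : Type*} [Group G] [Fintype G] [DecidableEq G] {S A : Finset G}
    (h1 : (1 : G) ∈ S) (hgen : Subgroup.closure (S : Set G) = ⊤) (hA : IsAtomOf S A)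
    (hY : ∀ Y, IsFragment S⁻¹ Y → A.card ≤ Y.card) : A.card ≤ ((A * S) \ A).card := by
  obtain ⟨a, ha⟩ := hA.1.1.1
  obtain ⟨H, hH⟩ : ∃ H, H = a⁻¹ • A := ⟨_, rfl⟩
  have hHa : IsAtomOf S H := hH ▸ aux_smul a⁻¹ hA
  have hHc : H.card = A.card := by rw [hH, Finset.card_smul_finset]
  have hH1 : (1 : G) ∈ H := by
    rw [hH]; exact Finset.mem_smul_finset.2 ⟨a, ha, by simp⟩
  have key : ∀ h ∈ H, h⁻¹ • H = H := by
    intro h hh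
    symm
    refine aux_inter h1 hHa (aux_smul h⁻¹ hHa) (by rwa [hHc]) ⟨1, ?_⟩
    exact Finset.mem_inter.2 ⟨hH1, Finset.mem_smul_finset.2 ⟨h, hh, by simp⟩⟩
  have hinv : ∀ h ∈ H, h⁻¹ ∈ H := by
    intro h hh
    rw [← key h hh]
    exact Finset.mem_smul_finset.2 ⟨1, hH1, by simp⟩
  have hmul : ∀ x ∈ H, ∀ y ∈ H, x * y ∈ H := by
    intro x hx y hy
    rw [← key _ (hinv x hx)]
    exact Finset.mem_smul_finset.2 ⟨y, hy, by simp⟩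
  have hs : ∃ s ∈ S, s ∉ H := by
    by_contra hc
    push Not at hc
    apply (aux_ne.1 hHa.1.1).2
    refine Finset.eq_univ_of_forall fun x => aux_le h1 H ?_
    have hx : x ∈ Subgroup.closure (S : Set G) := by rw [hgen]; trivial
    induction hx using Subgroup.closure_induction with
    | mem x hx => exact hc x hx
    | one => exact hH1
    | mul x y _ _ hx hy => exact hmul x hx y hy
    | inv x _ hx => exact hinv x hx
  obtain ⟨s, hsS, hsH⟩ := hs
  have hle : H.card ≤ ((H * S) \ H).card := by
    refine Finset.card_le_card_of_injOn (fun h => h * s) ?_ (fun x _ y _ h => mul_right_cancel h)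
    intro h hh
    refine Finset.mem_coe.2 (Finset.mem_sdiff.2 ⟨Finset.mul_mem_mul hh hsS, fun hc => hsH ?_⟩)
    have := hmul _ (hinv h hh) _ hc
    simpa using this
  have e1 := Finset.card_sdiff_add_card_eq_card (aux_le h1 H)
  have e2 := Finset.card_sdiff_add_card_eq_card (aux_le h1 A)
  have e3 : (H * S).card = (A * S).card := by
    rw [hH, smul_mul_assoc, Finset.card_smul_finset]
  omega

theorem aux_comm {G : Type*} [Group G] [Fintype G] [DecidableEq G]
    (hc : ∀ a b : G, a * b = b * a) (X Y : Finset G) : X⁻¹ * Y⁻¹ = (X * Y)⁻¹ := by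
  rw [mul_inv_rev]
  ext z
  simp only [Finset.mem_mul]
  constructor
  · rintro ⟨x, hx, y, hy, rfl⟩
    exact ⟨y, hy, x, hx, hc _ _⟩
  · rintro ⟨x, hx, y, hy, rfl⟩
    exact ⟨y, hy, x, hx, hc _ _⟩

theorem aux_commfrag {G : Type*} [Group G] [Fintype G] [DecidableEq G]
    (hc : ∀ a b : G, a * b = b * a) {S X : Finset G} (h : IsFragment S X) :
    IsFragment S⁻¹ X⁻¹ := by
  have hm : ∀ {T Y : Finset G}, MemFam T Y → MemFam T⁻¹ Y⁻¹ := by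
    intro T Y hY
    rw [aux_ne] at hY ⊢
    refine ⟨hY.1.inv, ?_⟩
    rw [aux_comm hc]
    intro hu
    apply hY.2
    rw [← Finset.card_eq_iff_eq_univ] at hu ⊢
    rwa [Finset.card_inv] at hu
  refine ⟨hm h.1, fun Y hY => ?_⟩
  have h2 := hm hY
  rw [inv_inv] at h2
  have h3 := h.2 _ h2
  have h4 := aux_comm hc Y S⁻¹
  rw [inv_inv] at h4
  rwa [h4, Finset.card_inv, Finset.card_inv, ← Finset.card_inv X, ← Finset.card_inv (X * S),
    ← aux_comm hc] at h3

/-- Let `G` be a finite group and `S` a generating subset of `G` with `1 ∈ S` and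
`S ≠ G`. If `S` is not faithful, then `G` is non-abelian and `S⁻¹` is faithful. -/
theorem stmt_5 {G : Type*} [Group G] [Fintype G] [DecidableEq G] (S : Finset G)
    (h1 : (1 : G) ∈ S) (hgen : Subgroup.closure (S : Set G) = ⊤)
    (hS : S ≠ Finset.univ) (hnf : ¬ IsFaithful S) :
    (∃ a b : G, a * b ≠ b * a) ∧ IsFaithful S⁻¹ := by
  have h1' : (1 : G) ∈ S⁻¹ := by simpa using h1
  have hgen' : Subgroup.closure ((S⁻¹ : Finset G) : Set G) = ⊤ := by
    rw [Finset.coe_inv, Subgroup.closure_inv, hgen]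
  have hF : IsFaithful S⁻¹ := by
    intro B hB
    by_contra hcB
    apply hnf
    intro A hA
    by_contra hcA
    rcases le_total A.card B.card with h | h
    · exact hcA (aux_main h1 hgen hA fun Y hY => h.trans (hB.2 Y hY))
    · refine hcB (aux_main h1' hgen' hB fun Y hY => h.trans (hA.2 Y ?_))
      rwa [inv_inv] at hY
  refine ⟨?_, hF⟩
  by_contra hc
  push Not at hc
  apply hnf
  intro A hA
  have hA' : IsAtomOf S⁻¹ A⁻¹ := by
    refine ⟨aux_commfrag hc hA.1, fun Y hY => ?_⟩
    have := aux_commfrag hc hY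
    rw [inv_inv] at this
    have := hA.2 _ this
    rwa [Finset.card_inv, ← Finset.card_inv A] at this
  have h := hF _ hA'
  have e1 := Finset.card_sdiff_add_card_eq_card (aux_le h1' A⁻¹)
  have e2 := Finset.card_sdiff_add_card_eq_card (aux_le h1 A)
  have e3 : (A⁻¹ * S⁻¹).card = (A * S).card := by rw [aux_comm hc, Finset.card_inv]
  have e4 : A⁻¹.card = A.card := Finset.card_inv A
  omega
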